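/- Let 𝒜 be a unital C*-algebra, 𝒮 ⊆ 𝒜 an operator system, and φ: 𝒮 → M_n(ℂ) a linear map. Then φ is completely positive if and only if its dual functional s_φ: M_n(𝒮) → ℂ satisfies s_φ(S) ≥ 0 for every S ∈ M_n(𝒮) that is positive in the C*-algebra M_n(𝒜). -/

import Mathlib

/-!
The quadratic form of the flattened matrix `[φ(sⱼₖ)]` at a vector of `ℂᵐ ⊗ ℂⁿ`, read as a scalar
`m × n` matrix `V`, is `s_φ(V* s V)`. Complete positivity of `φ` is therefore nonnegativity of `s_φ`
on all compressions `V* s V` of positive matrices `s` over `S`. Taking `V = 1` gives one direction.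
For the other, `V* s V` is itself a positive element of `Mₙ(𝒜)` with entries in `S`: if `s = b* b`,
then `V* s V = W* W` with `W = b V`. Since `W` is rectangular, positivity in `Mₙ(𝒜)` still has to be
shown: `W* W` is the sum of the elements `rᵢ* rᵢ`, where the square matrix `rᵢ` carries the `i`-th
row of `W`, and sums of positive elements of the C⋆-algebra `Mₙ(𝒜)` are positive.
-/

open scoped ComplexOrder
open Matrix

/-- An element of a star ring is *positive* if it equals `star b * b` for some `b`;
in a (matrix algebra over a) C*-algebra this is the usual notion of positivity. -/
def IsPosElem {R : Type*} [Ring R] [StarRing R] (x : R) : Prop :=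
  ∃ b : R, x = star b * b

variable {A : Type*} [NormedRing A] [StarRing A] [CStarRing A]
  [CompleteSpace A] [NormedAlgebra ℂ A] [StarModule ℂ A]

/-- The canonical image in `Mₘ(𝒜)` of a matrix with entries in the operator system `S`. -/
def matCoe {S : Submodule ℂ A} {m : ℕ} (s : Matrix (Fin m) (Fin m) S) :
    Matrix (Fin m) (Fin m) A :=
  Matrix.of fun j k => (s j k : A)

/-- `J_m(S)`: matrices over `S` which are positive in `Mₘ(𝒜)` together with their
partial transpose. -/
def memJ {S : Submodule ℂ A} {m : ℕ} (s : Matrix (Fin m) (Fin m) S) : Prop :=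
  IsPosElem (matCoe s) ∧ IsPosElem (matCoe s)ᵀ

/-- A map `φ : S → Mₙ(ℂ)` is positive if it sends positive elements of `𝒜` lying in `S`
to positive semidefinite matrices. -/
def IsPosMap {S : Submodule ℂ A} {n : ℕ}
    (φ : S →ₗ[ℂ] Matrix (Fin n) (Fin n) ℂ) : Prop :=
  ∀ s : S, IsPosElem (s : A) → IsPosElem (φ s)

/-- Complete positivity of `φ : S → Mₙ(ℂ)`: every positive matrix over `S` is sent,
entrywise, to a positive element of `Mₘ(Mₙ(ℂ))`. -/
def IsCPMap {S : Submodule ℂ A} {n : ℕ}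
    (φ : S →ₗ[ℂ] Matrix (Fin n) (Fin n) ℂ) : Prop :=
  ∀ (m : ℕ) (s : Matrix (Fin m) (Fin m) S),
    IsPosElem (matCoe s) → IsPosElem (s.map ⇑φ)

/-- `φ` is co-completely positive if `transpose ∘ φ` is completely positive. -/
def IsCoCPMap {S : Submodule ℂ A} {n : ℕ}
    (φ : S →ₗ[ℂ] Matrix (Fin n) (Fin n) ℂ) : Prop :=
  ∀ (m : ℕ) (s : Matrix (Fin m) (Fin m) S),
    IsPosElem (matCoe s) → IsPosElem (s.map fun a => (φ a)ᵀ)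

/-- `φ` is decomposable if it is the sum of a completely positive and a
co-completely positive map. -/
noncomputable def IsDecomposable {S : Submodule ℂ A} {n : ℕ}
    (φ : S →ₗ[ℂ] Matrix (Fin n) (Fin n) ℂ) : Prop :=
  ∃ ψ η : S →ₗ[ℂ] Matrix (Fin n) (Fin n) ℂ,
    IsCPMap ψ ∧ IsCoCPMap η ∧ φ = ψ + η

/-- The dual functional `s_φ` on `Mₙ(S)`, `s_φ([x_{ij}]) = ∑_{i,j} (φ(x_{ij}))_{ij}`. -/
noncomputable def dualFunc {S : Submodule ℂ A} {n : ℕ}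
    (φ : S →ₗ[ℂ] Matrix (Fin n) (Fin n) ℂ)
    (x : Matrix (Fin n) (Fin n) S) : ℂ :=
  ∑ i, ∑ j, φ (x i j) i j

/-- The cone `S⁺ ⊗ Mₙ(ℂ)⁺` inside `Mₙ(𝒜)`: finite sums `∑ sₗ ⊗ xₗ` with `sₗ ∈ S`
positive in `𝒜` and `xₗ` positive semidefinite. -/
def posCone (S : Submodule ℂ A) (n : ℕ) : Set (Matrix (Fin n) (Fin n) A) :=
  { T | ∃ (k : ℕ) (s : Fin k → A) (x : Fin k → Matrix (Fin n) (Fin n) ℂ),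
      (∀ l, s l ∈ S ∧ IsPosElem (s l)) ∧ (∀ l, IsPosElem (x l)) ∧
      T = ∑ l, Matrix.of fun p q => x l p q • s l }

section Positivity

lemma isPosElem_map_iff {F R R' : Type*} [Ring R] [StarRing R] [Ring R'] [StarRing R']
    [EquivLike F R R'] [MulEquivClass F R R'] [StarHomClass F R R'] (e : F) {x : R} :
    IsPosElem (e x) ↔ IsPosElem x := by
  refine ⟨fun ⟨b, hb⟩ => ?_, fun ⟨b, hb⟩ => ⟨e b, by rw [hb, map_mul, map_star]⟩⟩
  obtain ⟨c, rfl⟩ := EquivLike.surjective e b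
  exact ⟨c, EquivLike.injective e (by rw [hb, map_mul, map_star])⟩

lemma IsPosElem.sum {R ι : Type*} [CStarAlgebra R] {t : Finset ι} {x : ι → R}
    (hx : ∀ i ∈ t, IsPosElem (x i)) : IsPosElem (∑ i ∈ t, x i) := by
  let _ : PartialOrder R := CStarAlgebra.spectralOrder R
  have _ : StarOrderedRing R := CStarAlgebra.spectralOrderedRing R
  simp only [IsPosElem, ← CStarAlgebra.nonneg_iff_eq_star_mul_self] at hx ⊢
  exact Finset.sum_nonneg hx

end Positivity

section ComplexMatrices

variable {ι κ : Type*} [Fintype ι] [Fintype κ]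

/-- Over `ℂ`, unlike over `ℝ`, a matrix with a real-valued quadratic form is Hermitian. -/
lemma posSemidef_iff_forall_dotProduct_mulVec_nonneg {M : Matrix ι ι ℂ} :
    M.PosSemidef ↔ ∀ v : ι → ℂ, 0 ≤ star v ⬝ᵥ (M *ᵥ v) := by
  refine ⟨fun hM => hM.dotProduct_mulVec_nonneg, fun h => .of_dotProduct_mulVec_nonneg ?_ h⟩
  classical
  rw [← isSymmetric_toEuclideanLin_iff, LinearMap.isSymmetric_iff_inner_map_self_real]
  intro v
  have hv : inner ℂ v (M.toEuclideanLin v) = star v.ofLp ⬝ᵥ (M *ᵥ v.ofLp) := by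
    simp [EuclideanSpace.inner_eq_star_dotProduct, dotProduct_comm]
  rw [inner_conj_symm, ← inner_conj_symm (M.toEuclideanLin v), hv]
  exact (h _).isSelfAdjoint.star_eq.symm

/-- The flattening `M_ι(M_κ(R)) ≃ M_{ι × κ}(R)`, as an isomorphism of star rings, which
therefore preserves positivity in both directions. -/
def compStarRingEquiv (ι κ R : Type*) [Fintype ι] [Fintype κ] [NonUnitalSemiring R] [StarRing R] :
    Matrix ι ι (Matrix κ κ R) ≃⋆+* Matrix (ι × κ) (ι × κ) R where
  __ := compRingEquiv ι κ R
  map_star' M := (conjTranspose_comp' M).symm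

variable [DecidableEq ι] [DecidableEq κ]

lemma isPosElem_iff_posSemidef {M : Matrix ι ι ℂ} : IsPosElem M ↔ M.PosSemidef := by
  open scoped MatrixOrder Matrix.Norms.L2Operator in
  rw [← nonneg_iff_posSemidef, CStarAlgebra.nonneg_iff_eq_star_mul_self, IsPosElem]

lemma isPosElem_iff_posSemidef_comp {M : Matrix ι ι (Matrix κ κ ℂ)} :
    IsPosElem M ↔ (comp ι ι κ κ ℂ M).PosSemidef :=
  (isPosElem_map_iff (compStarRingEquiv ι κ ℂ)).symm.trans isPosElem_iff_posSemidef

end ComplexMatrices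

section RectangularFactors

variable {ι κ R : Type*} [Fintype ι] [Fintype κ] [DecidableEq κ]

lemma conjTranspose_mul_self_eq_sum_updateRow [NonUnitalSemiring R] [StarRing R]
    (W : Matrix ι κ R) (k₀ : κ) :
    Wᴴ * W = ∑ i, star (updateRow 0 k₀ (W i)) * updateRow 0 k₀ (W i) := by
  ext p q
  simp [Matrix.sum_apply, Matrix.mul_apply, updateRow_apply, star_apply, apply_ite]

lemma isPosElem_conjTranspose_mul_self [CStarAlgebra R] (W : Matrix ι κ R) :
    IsPosElem (Wᴴ * W) := by
  obtain _ | ⟨⟨k₀⟩⟩ := isEmpty_or_nonempty κ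
  · exact ⟨0, Subsingleton.elim _ _⟩
  let _ : PartialOrder R := CStarAlgebra.spectralOrder R
  have _ : StarOrderedRing R := CStarAlgebra.spectralOrderedRing R
  rw [← isPosElem_map_iff (CStarMatrix.ofMatrixStarAlgEquiv (n := κ) (A := R)),
    conjTranspose_mul_self_eq_sum_updateRow W k₀, map_sum]
  exact .sum fun i _ => (isPosElem_map_iff _).2 ⟨_, rfl⟩

end RectangularFactors

section Compression

variable {𝕜 E F ι κ : Type*} [Fintype ι]

/-- The compression `V* M V` of a square matrix `M` over a `𝕜`-module by a rectangular scalar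
matrix `V`. It is defined entrywise since the entries of `M` can only be multiplied by scalars. -/
def scalarCompression [Semiring 𝕜] [Star 𝕜] [AddCommMonoid E] [Module 𝕜 E]
    (V : Matrix ι κ 𝕜) (M : Matrix ι ι E) : Matrix κ κ E :=
  of fun p q => ∑ j, ∑ k, (star (V j p) * V k q) • M j k

lemma scalarCompression_map [Semiring 𝕜] [Star 𝕜] [AddCommMonoid E] [Module 𝕜 E]
    [AddCommMonoid F] [Module 𝕜 F] (f : E →ₗ[𝕜] F) (V : Matrix ι κ 𝕜) (M : Matrix ι ι E) :
    scalarCompression V (M.map f) = (scalarCompression V M).map f := by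
  ext p q
  simp [scalarCompression]

lemma scalarCompression_one [Semiring 𝕜] [StarRing 𝕜] [AddCommMonoid E] [Module 𝕜 E]
    [DecidableEq ι] (M : Matrix ι ι E) : scalarCompression (1 : Matrix ι ι 𝕜) M = M := by
  ext p q
  simp [scalarCompression, one_apply, apply_ite]

lemma scalarCompression_eq_conjTranspose_mul_mul [CommSemiring 𝕜] [StarRing 𝕜] [Semiring E]
    [StarRing E] [Algebra 𝕜 E] [StarModule 𝕜 E] (V : Matrix ι κ 𝕜) (M : Matrix ι ι E) :
    scalarCompression V M = (V.map (algebraMap 𝕜 E))ᴴ * M * V.map (algebraMap 𝕜 E) := by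
  ext p q
  simp only [scalarCompression, of_apply, Matrix.mul_apply, conjTranspose_apply, map_apply,
    Finset.sum_mul, ← algebraMap_star_comm]
  rw [Finset.sum_comm]
  refine Finset.sum_congr rfl fun k _ => Finset.sum_congr rfl fun j _ => ?_
  rw [← Algebra.smul_def, ← Algebra.commutes, ← Algebra.smul_def, smul_smul, mul_comm]

lemma isPosElem_scalarCompression [CStarAlgebra E] [Fintype κ] [DecidableEq ι] [DecidableEq κ]
    {M : Matrix ι ι E} (hM : IsPosElem M) (V : Matrix ι κ ℂ) :
    IsPosElem (scalarCompression V M) := by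
  obtain ⟨b, rfl⟩ := hM
  have hfactor : scalarCompression V (star b * b) =
      (b * V.map (algebraMap ℂ E))ᴴ * (b * V.map (algebraMap ℂ E)) := by
    rw [scalarCompression_eq_conjTranspose_mul_mul, conjTranspose_mul, star_eq_conjTranspose]
    simp only [Matrix.mul_assoc]
  exact hfactor ▸ isPosElem_conjTranspose_mul_self _

end Compression

section DualFunctional

variable {B : Type*} [NormedRing B] [NormedAlgebra ℂ B] {S : Submodule ℂ B} {n : ℕ}
  (φ : S →ₗ[ℂ] Matrix (Fin n) (Fin n) ℂ)

lemma matCoe_scalarCompression {m : ℕ} (V : Matrix (Fin m) (Fin n) ℂ)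
    (s : Matrix (Fin m) (Fin m) S) :
    matCoe (scalarCompression V s) = scalarCompression V (matCoe s) :=
  (scalarCompression_map S.subtype V s).symm

lemma star_vec_dotProduct_comp_map_mulVec_vec {ι : Type*} [Fintype ι]
    (s : Matrix ι ι S) (V : Matrix ι (Fin n) ℂ) :
    star (vec Vᵀ) ⬝ᵥ (comp ι ι (Fin n) (Fin n) ℂ (s.map φ) *ᵥ vec Vᵀ) =
      dualFunc φ (scalarCompression V s) :=
  calc
    _ = ∑ j, ∑ p, ∑ k, ∑ q, star (V j p) * V k q * φ (s j k) p q := by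
      simp only [dotProduct, mulVec, Fintype.sum_prod_type, Finset.mul_sum, comp_apply, map_apply,
        Pi.star_apply, vec, transpose_apply, mul_assoc, mul_comm (V _ _)]
    _ = ∑ p, ∑ q, ∑ j, ∑ k, star (V j p) * V k q * φ (s j k) p q := by
      rw [Finset.sum_comm]
      refine Finset.sum_congr rfl fun p _ => ?_
      rw [Finset.sum_comm (γ := Fin n)]
      exact Finset.sum_congr rfl fun j _ => Finset.sum_comm
    _ = dualFunc φ (scalarCompression V s) := by
      simp only [dualFunc, scalarCompression, of_apply, map_sum, map_smul, Matrix.sum_apply,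
        Matrix.smul_apply, smul_eq_mul]

lemma isCPMap_iff_dualFunc_scalarCompression_nonneg [StarRing B] :
    IsCPMap φ ↔ ∀ (m : ℕ) (s : Matrix (Fin m) (Fin m) S), IsPosElem (matCoe s) →
      ∀ V : Matrix (Fin m) (Fin n) ℂ, 0 ≤ dualFunc φ (scalarCompression V s) := by
  refine forall₃_congr fun m s _ => ?_
  rw [isPosElem_iff_posSemidef_comp, posSemidef_iff_forall_dotProduct_mulVec_nonneg,
    (vec_bijective.surjective.comp (transposeAddEquiv _ _ _).surjective).forall]
  simp only [Function.comp_apply, transposeAddEquiv_apply,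
    star_vec_dotProduct_comp_map_mulVec_vec]

end DualFunctional

theorem cp_iff_dualFunc_nonneg_on_pos_general
    (S : Submodule ℂ A) (n : ℕ) (φ : S →ₗ[ℂ] Matrix (Fin n) (Fin n) ℂ) :
    IsCPMap φ ↔
      (∀ s : Matrix (Fin n) (Fin n) S, IsPosElem (matCoe s) → 0 ≤ dualFunc φ s) := by
  let _ : CStarAlgebra A := {}
  rw [isCPMap_iff_dualFunc_scalarCompression_nonneg]
  constructor
  · intro h s hs
    simpa only [scalarCompression_one] using h n s hs 1
  · intro h m s hs V
    apply h
    rw [matCoe_scalarCompression]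
    exact isPosElem_scalarCompression hs V

/-- `φ` is completely positive iff its dual functional is nonnegative
on the positive elements of `Mₙ(S)`. -/
theorem cp_iff_dualFunc_nonneg_on_pos
    (S : Submodule ℂ A) (h_one : (1 : A) ∈ S) (h_star : ∀ a ∈ S, star a ∈ S)
    (n : ℕ) (φ : S →ₗ[ℂ] Matrix (Fin n) (Fin n) ℂ) :
    IsCPMap φ ↔
      (∀ s : Matrix (Fin n) (Fin n) S, IsPosElem (matCoe s) → 0 ≤ dualFunc φ s) :=
  cp_iff_dualFunc_nonneg_on_pos_general S n φ
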